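/- Let β > 1, ζ > 1, α > 0, C > 0, q ≥ 0 with β^{1−ζ}·(1 + q) < 1, let h > 0, n ≥ 2, γ ∈ (0, 1], and set C_ζ = 1 / (1 − β^{1−ζ}·(1 + q)). Suppose m̄ > (C·C_ζ/γ)^{1/α} and that positive real numbers m_2, …, m_n satisfy m_k^α ≥ m̄^α · β^{ζ(n−k)} for k = 2, …, n. If nonnegative real numbers e_1, …, e_n satisfy e_1 = 0 and e_{k+1} ≤ (1 + q)·e_k + C·β^{n−k−1}·h / m_{k+1}^α for k = 1, …, n−1, then e_n ≤ (C·C_ζ/m̄^α)·h, and in particular e_n ≤ γ·h. -/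

import Mathlib

/-!
Put `r = β ^ (1 - ζ)` and `M = mbar ^ α`. On level `k` the mesh size grows like `β ^ (n - k)` and
the weight `m k ^ α` at least like `M * β ^ (ζ * (n - k))`, so the smoothing error is at most
`(C * h / M) * r ^ (n - k)`. The sequence `(C * h / M) * r ^ (n - k) / (1 - r * (1 + q))`
solves the resulting recursion with equality, hence dominates the error on every level, and `k = n`
is the claim.
-/

theorem le_geometric_of_le_mul_add {K : Type*} [Field K] [LinearOrder K] [IsStrictOrderedRing K]
    {a b r : K} {e : ℕ → K} {l n : ℕ} (ha : 0 ≤ a) (hra : r * a ≠ 1)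
    (hstart : e l ≤ b * r ^ (n - l) / (1 - r * a))
    (hstep : ∀ k, l ≤ k → k < n → e (k + 1) ≤ a * e k + b * r ^ (n - (k + 1))) :
    ∀ k, l ≤ k → k ≤ n → e k ≤ b * r ^ (n - k) / (1 - r * a) := by
  intro k hlk
  induction k, hlk using Nat.le_induction with
  | base => exact fun _ ↦ hstart
  | succ k hlk ih =>
    intro hkn
    have hsub : n - k = n - (k + 1) + 1 := by lia
    have hne : 1 - r * a ≠ 0 := sub_ne_zero.2 hra.symm
    calc e (k + 1) ≤ a * e k + b * r ^ (n - (k + 1)) := hstep k hlk hkn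
      _ ≤ a * (b * r ^ (n - k) / (1 - r * a)) + b * r ^ (n - (k + 1)) := by
        gcongr
        exact ih (Nat.le_of_succ_le hkn)
      _ = b * r ^ (n - (k + 1)) / (1 - r * a) := by
        rw [hsub, pow_succ, mul_div_assoc', div_add' _ _ _ hne]
        ring

theorem pow_eq_rpow_one_sub_pow_mul_rpow {β : ℝ} (hβ : 0 < β) (ζ : ℝ) (j : ℕ) :
    β ^ j = (β ^ (1 - ζ)) ^ j * β ^ (ζ * j) := by
  rw [← Real.rpow_mul_natCast hβ.le, ← Real.rpow_add hβ, ← Real.rpow_natCast]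
  congr 1
  ring

theorem pow_div_le_rpow_one_sub_pow_div {β ζ M s : ℝ} {j : ℕ} (hβ : 0 < β) (hM : 0 < M)
    (hs : M * β ^ (ζ * j) ≤ s) : β ^ j / s ≤ (β ^ (1 - ζ)) ^ j / M := by
  calc β ^ j / s ≤ β ^ j / (M * β ^ (ζ * j)) := by gcongr
    _ = (β ^ (1 - ζ)) ^ j / M := by
      rw [pow_eq_rpow_one_sub_pow_mul_rpow hβ ζ j]
      field_simp

/-- Here `s k` and `M` stand for `m k ^ α` and `mbar ^ α`. -/
theorem stmt4_general {β ζ C q h γ M Cζ : ℝ} {n : ℕ} {s e : ℕ → ℝ}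
    (hβ : 0 < β) (hC : 0 < C) (hq : -1 ≤ q) (hsmall : β ^ (1 - ζ) * (1 + q) < 1)
    (hh : 0 ≤ h) (hn : 1 ≤ n) (hγ : 0 < γ)
    (hCζ : Cζ = 1 / (1 - β ^ (1 - ζ) * (1 + q))) (hM : C * Cζ / γ ≤ M)
    (hs : ∀ k, 2 ≤ k → k ≤ n → M * β ^ (ζ * ((n - k : ℕ) : ℝ)) ≤ s k)
    (he1 : e 1 ≤ 0)
    (hrec : ∀ k, 1 ≤ k → k ≤ n - 1 →
      e (k + 1) ≤ (1 + q) * e k + C * β ^ (n - k - 1) * h / s (k + 1)) :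
    e n ≤ C * Cζ / M * h ∧ e n ≤ γ * h := by
  have hgap : 0 < 1 - β ^ (1 - ζ) * (1 + q) := sub_pos.2 hsmall
  have hCζ_pos : 0 < Cζ := hCζ ▸ one_div_pos.2 hgap
  have hM_pos : 0 < M := lt_of_lt_of_le (by positivity) hM
  have hstart : e 1 ≤ C * h / M * (β ^ (1 - ζ)) ^ (n - 1) / (1 - β ^ (1 - ζ) * (1 + q)) :=
    he1.trans (by positivity)
  have hstep : ∀ k, 1 ≤ k → k < n →
      e (k + 1) ≤ (1 + q) * e k + C * h / M * (β ^ (1 - ζ)) ^ (n - (k + 1)) := by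
    intro k hk hkn
    have hsmooth := pow_div_le_rpow_one_sub_pow_div hβ hM_pos (hs (k + 1) (by lia) hkn)
    calc e (k + 1) ≤ (1 + q) * e k + C * β ^ (n - (k + 1)) * h / s (k + 1) :=
          hrec k hk (Nat.le_sub_one_of_lt hkn)
      _ = (1 + q) * e k + C * h * (β ^ (n - (k + 1)) / s (k + 1)) := by ring
      _ ≤ (1 + q) * e k + C * h * ((β ^ (1 - ζ)) ^ (n - (k + 1)) / M) := by gcongr
      _ = (1 + q) * e k + C * h / M * (β ^ (1 - ζ)) ^ (n - (k + 1)) := by ring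
  have hbound : e n ≤ C * Cζ / M * h := by
    refine (le_geometric_of_le_mul_add (by linarith) hsmall.ne hstart hstep n hn le_rfl).trans_eq ?_
    rw [hCζ, Nat.sub_self]
    ring
  have hconst : C * Cζ / M ≤ γ := (div_le_comm₀ hγ hM_pos).1 hM
  exact ⟨hbound, hbound.trans (mul_le_mul_of_nonneg_right hconst hh)⟩

/-- Abstract form of the final accuracy estimate of Theorem 3.4 for the cascadic
multigrid method: under the recursion
`e (k+1) ≤ (1+q) e k + C β^(n-k-1) h / m (k+1)^α` with `e 1 = 0`,
smoothing numbers `m_k^α ≥ m̄^α β^(ζ(n-k))` and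
`m̄ > (C C_ζ / γ)^(1/α)` where `C_ζ = 1 / (1 - β^(1-ζ)(1+q))`,
one has `e n ≤ (C C_ζ / m̄^α) h` and in particular `e n ≤ γ h`. -/
theorem stmt4 (β ζ α C q h γ mbar : ℝ) (n : ℕ) (m e : ℕ → ℝ)
    (hβ : 1 < β) (hζ : 1 < ζ) (hα : 0 < α) (hC : 0 < C) (hq : 0 ≤ q)
    (hsmall : β ^ (1 - ζ) * (1 + q) < 1)
    (hh : 0 < h) (hn : 2 ≤ n) (hγ : γ ∈ Set.Ioc (0 : ℝ) 1)
    (Cζ : ℝ) (hCζ : Cζ = 1 / (1 - β ^ (1 - ζ) * (1 + q)))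
    (hmbar : (C * Cζ / γ) ^ (1 / α) < mbar)
    (hm_pos : ∀ k, 2 ≤ k → k ≤ n → 0 < m k)
    (hm : ∀ k, 2 ≤ k → k ≤ n → mbar ^ α * β ^ (ζ * ((n - k : ℕ) : ℝ)) ≤ m k ^ α)
    (he_nonneg : ∀ k, 1 ≤ k → k ≤ n → 0 ≤ e k)
    (he1 : e 1 = 0)
    (hrec : ∀ k, 1 ≤ k → k ≤ n - 1 →
      e (k + 1) ≤ (1 + q) * e k + C * β ^ (n - k - 1) * h / m (k + 1) ^ α) :
    e n ≤ C * Cζ / mbar ^ α * h ∧ e n ≤ γ * h := by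
  have hthreshold : 0 ≤ C * Cζ / γ :=
    div_nonneg (mul_nonneg hC.le (hCζ ▸ one_div_nonneg.2 (sub_pos.2 hsmall).le)) hγ.1.le
  have hM : C * Cζ / γ < mbar ^ α := by
    have hmbar_nonneg : 0 ≤ mbar := (Real.rpow_nonneg hthreshold _).trans hmbar.le
    rwa [one_div, Real.rpow_inv_lt_iff_of_pos hthreshold hmbar_nonneg hα] at hmbar
  exact stmt4_general (zero_lt_one.trans hβ) hC (by linarith) hsmall hh.le (by lia) hγ.1 hCζ hM.le
    hm he1.le hrec
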